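/- For all positive integers n and k, F_n^{k+1} divides F_{n·F_n^k}. -/

import Mathlib

theorem fib_add_int (M m : ℕ) : (Nat.fib (M + m) : ℤ) =
    Nat.fib M * (Nat.fib (m + 1) - Nat.fib m) + Nat.fib (M + 1) * Nat.fib m := by
  cases m with
  | zero => simp
  | succ m =>
    have h := Nat.fib_add M m
    have h2 := Nat.fib_add_two (n := m)
    rw [← add_assoc, h, show m + 1 + 1 = m + 2 from rfl, h2]
    push_cast
    ring

theorem fib_mul_expand (m r : ℕ) : ∃ a b : ℤ,
    (Nat.fib (m * (r + 1)) : ℤ) =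
      (r + 1) * Nat.fib m * (Nat.fib (m + 1) : ℤ) ^ r + (Nat.fib m : ℤ) ^ 2 * a ∧
    (Nat.fib (m * (r + 1) + 1) : ℤ) = (Nat.fib (m + 1) : ℤ) ^ (r + 1) + Nat.fib m * b := by
  induction r with
  | zero => exact ⟨0, 0, by simp, by simp⟩
  | succ r ih =>
    obtain ⟨a, b, h1, h2⟩ := ih
    refine ⟨a * Nat.fib (m + 1) + b - ((r + 1) * (Nat.fib (m + 1) : ℤ) ^ r + Nat.fib m * a),
      Nat.fib (m * (r + 1)) + b * Nat.fib (m + 1), ?_, ?_⟩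
    · rw [show m * (r + 1 + 1) = m * (r + 1) + m by ring, fib_add_int, h1, h2]
      push_cast
      ring
    · rw [show m * (r + 1 + 1) = m * (r + 1) + m by ring, Nat.fib_add]
      push_cast
      rw [h2]
      ring

theorem fib_pow_dvd (n k : ℕ) (hn : 1 ≤ n) :
    Nat.fib n ^ (k + 1) ∣ Nat.fib (n * Nat.fib n ^ k) := by
  induction k with
  | zero => simp
  | succ k ih =>
    obtain ⟨r, hr⟩ : ∃ r, Nat.fib n = r + 1 :=
      ⟨Nat.fib n - 1, by have := Nat.fib_pos.2 hn; omega⟩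
    obtain ⟨a, b, h1, -⟩ := fib_mul_expand (n * Nat.fib n ^ k) r
    rw [← hr, mul_assoc, ← pow_succ] at h1
    have hr' : (r : ℤ) + 1 = Nat.fib n := by rw [hr]; push_cast; ring
    obtain ⟨c, hc⟩ := ih
    rw [hr', hc] at h1
    zify
    rw [h1]
    refine ⟨c * (Nat.fib (n * Nat.fib n ^ k + 1) : ℤ) ^ r + (Nat.fib n : ℤ) ^ k * c ^ 2 * a, ?_⟩
    push_cast
    ring

theorem stmt_10 (n k : ℕ) (hn : 1 ≤ n) (hk : 1 ≤ k) :
    Nat.fib n ^ (k + 1) ∣ Nat.fib (n * Nat.fib n ^ k) := by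
  exact fib_pow_dvd n k hn
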